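/- Let b > 0 and μ ∈ ℂ with 0 < Re μ < 1. Then the improper integrals lim_{M→∞} ∫₀^M y^{μ−1} e^{iby} dy and lim_{M→∞} ∫₀^M y^{μ−1} e^{−iby} dy exist and equal Γ(μ)·b^{−μ}·e^{iμπ/2} and Γ(μ)·b^{−μ}·e^{−iμπ/2} respectively. -/

import Mathlib

open MeasureTheory Filter Complex
open scoped Topology

noncomputable section

/-!
For `Re r > 0` the Laplace transform `∫₀^∞ y^{μ-1} e^{-ry} dy` equals `Γ(μ) r^{-μ}`, by analytic
continuation from real `r`. One integration by parts bounds the tail `∫_M^∞` by a constant times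
`M^{Re μ - 1} / |r|`. This bound does not degenerate as `r` tends to a nonzero point of the
imaginary axis, so by continuity of `r ↦ ∫₀^M` it holds there too; letting `M → ∞` at `r = ∓ib`
gives both integrals.
-/

lemma mem_slitPlane_of_re_nonneg {z : ℂ} (hz : 0 ≤ z.re) (hz₀ : z ≠ 0) : z ∈ slitPlane :=
  hz.lt_or_eq.imp_right fun hre him => hz₀ (Complex.ext hre.symm him)

section Laplace

variable {a s r : ℂ}

lemma norm_cpow_mul_exp_neg_mul (s r : ℂ) {y : ℝ} (hy : 0 < y) :
    ‖(y : ℂ) ^ s * cexp (-(r * y))‖ = y ^ s.re * Real.exp (-(r.re * y)) := by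
  rw [norm_mul, norm_cpow_eq_rpow_re_of_pos hy, norm_exp, neg_re, re_mul_ofReal]

lemma norm_cpow_mul_exp_neg_mul_le (s : ℂ) (hr : 0 ≤ r.re) {y : ℝ} (hy : 0 < y) :
    ‖(y : ℂ) ^ s * cexp (-(r * y))‖ ≤ y ^ s.re := by
  rw [norm_cpow_mul_exp_neg_mul s r hy]
  exact mul_le_of_le_one_right (by positivity)
    (Real.exp_le_one_iff.2 (neg_nonpos.2 (by positivity)))

lemma integrableOn_rpow_mul_exp_neg_mul {p c : ℝ} (hp : -1 < p) (hc : 0 < c) :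
    IntegrableOn (fun y : ℝ => y ^ p * Real.exp (-(c * y))) (Set.Ioi 0) := by
  simpa only [Real.rpow_one, neg_mul] using integrableOn_rpow_mul_exp_neg_mul_rpow hp one_pos hc

lemma integrableOn_cpow_mul_exp_neg_mul (hs : -1 < s.re) (hr : 0 < r.re) :
    IntegrableOn (fun y : ℝ => (y : ℂ) ^ s * cexp (-(r * y))) (Set.Ioi 0) := by
  refine (integrableOn_rpow_mul_exp_neg_mul hs hr).mono' (by fun_prop) ?_
  filter_upwards [ae_restrict_mem measurableSet_Ioi] with y hy
  exact (norm_cpow_mul_exp_neg_mul s r hy).le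

lemma intervalIntegrable_cpow_mul_exp_neg_mul (hs : -1 < s.re) (r : ℂ) (M N : ℝ) :
    IntervalIntegrable (fun y : ℝ => (y : ℂ) ^ s * cexp (-(r * y))) volume M N :=
  (intervalIntegral.intervalIntegrable_cpow' hs).mul_continuousOn (by fun_prop)

lemma continuous_integral_cpow_mul_exp_neg_mul (hs : -1 < s.re) (M N : ℝ) :
    Continuous fun r : ℂ => ∫ y in M..N, (y : ℂ) ^ s * cexp (-(r * y)) := by
  refine continuous_iff_continuousAt.2 fun r₀ =>
    intervalIntegral.continuousAt_of_dominated_interval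
      (bound := fun y => ‖(y : ℂ) ^ s‖ * Real.exp ((‖r₀‖ + 1) * |y|))
      (.of_forall fun r => by fun_prop) ?_
      ((intervalIntegral.intervalIntegrable_cpow' hs).norm.mul_continuousOn (by fun_prop))
      (.of_forall fun y _ => by fun_prop)
  filter_upwards [continuous_norm.continuousAt.eventually_le_const (lt_add_one ‖r₀‖)] with r hr
  refine .of_forall fun y _ => ?_
  rw [norm_mul]
  gcongr
  calc ‖cexp (-(r * y))‖ ≤ Real.exp ‖-(r * y)‖ := norm_exp_le_exp_norm _
    _ = Real.exp (‖r‖ * |y|) := by rw [norm_neg, norm_mul, norm_real, Real.norm_eq_abs]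
    _ ≤ Real.exp ((‖r₀‖ + 1) * |y|) := by gcongr

lemma hasDerivAt_integral_cpow_mul_exp_neg_mul (hs : -1 < s.re) (hr : 0 < r.re) :
    HasDerivAt (fun z : ℂ => ∫ y in Set.Ioi (0 : ℝ), (y : ℂ) ^ s * cexp (-(z * y)))
      (-∫ y in Set.Ioi (0 : ℝ), (y : ℂ) ^ (s + 1) * cexp (-(r * y))) r := by
  have hU : {z : ℂ | r.re / 2 < z.re} ∈ 𝓝 r :=
    (isOpen_lt continuous_const continuous_re).mem_nhds (half_lt_self hr)
  refine (hasDerivAt_integral_of_dominated_loc_of_deriv_le hU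
    (μ := volume.restrict (Set.Ioi 0)) (F := fun z y => (y : ℂ) ^ s * cexp (-(z * y)))
    (F' := fun z y => -((y : ℂ) ^ (s + 1) * cexp (-(z * y))))
    (bound := fun y => y ^ (s.re + 1) * Real.exp (-(r.re / 2 * y)))
    (.of_forall fun z => by fun_prop) (integrableOn_cpow_mul_exp_neg_mul hs hr) (by fun_prop) ?_
    (integrableOn_rpow_mul_exp_neg_mul (by linarith) (half_pos hr)) ?_).2.congr_deriv
      (integral_neg _)
  · filter_upwards [ae_restrict_mem measurableSet_Ioi] with y (hy : 0 < y) z hz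
    rw [norm_neg, norm_cpow_mul_exp_neg_mul _ _ hy, add_re, one_re]
    gcongr
  · filter_upwards [ae_restrict_mem measurableSet_Ioi] with y (hy : 0 < y) z _
    have hexp : HasDerivAt (fun z : ℂ => cexp (-(z * y))) (cexp (-(z * y)) * -(y : ℂ)) z :=
      (hasDerivAt_mul_const (y : ℂ)).neg.cexp
    refine (hexp.const_mul ((y : ℂ) ^ s)).congr_deriv ?_
    rw [cpow_add _ _ (ofReal_ne_zero.2 hy.ne'), cpow_one]
    ring

lemma integral_cpow_mul_exp_neg_mul_Ioi_of_re_pos (ha : 0 < a.re) (hr : 0 < r.re) :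
    ∫ y in Set.Ioi (0 : ℝ), (y : ℂ) ^ (a - 1) * cexp (-(r * y)) = Gamma a * r ^ (-a) := by
  have hU : IsOpen {z : ℂ | 0 < z.re} := isOpen_lt continuous_const continuous_re
  have hlaplace : DifferentiableOn ℂ
      (fun z : ℂ => ∫ y in Set.Ioi (0 : ℝ), (y : ℂ) ^ (a - 1) * cexp (-(z * y)))
      {z | 0 < z.re} := fun z hz =>
    (hasDerivAt_integral_cpow_mul_exp_neg_mul (by simpa using ha) hz).differentiableAt
      |>.differentiableWithinAt
  have hpow : DifferentiableOn ℂ (fun z : ℂ => Gamma a * z ^ (-a)) {z | 0 < z.re} := fun z hz =>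
    ((differentiableAt_id.cpow_const (Or.inl hz)).const_mul _).differentiableWithinAt
  have hreal : ∀ᶠ x : ℝ in 𝓝[≠] 1,
      ∫ y in Set.Ioi (0 : ℝ), (y : ℂ) ^ (a - 1) * cexp (-(x * y)) = Gamma a * (x : ℂ) ^ (-a) := by
    filter_upwards [nhdsWithin_le_nhds (eventually_gt_nhds one_pos)] with x hx
    rw [integral_cpow_mul_exp_neg_mul_Ioi ha hx, mul_comm, one_div,
      inv_cpow_ofReal_nonneg hx.le, cpow_neg]
  have hofReal : Tendsto ofReal (𝓝[≠] 1) (𝓝[≠] 1) :=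
    ofReal_one ▸
      continuous_ofReal.continuousWithinAt.tendsto_nhdsWithin fun _ hx => ofReal_ne_one.2 hx
  exact (hlaplace.analyticOnNhd hU).eqOn_of_preconnected_of_frequently_eq
    (hpow.analyticOnNhd hU) (convex_halfSpace_re_gt 0).isPreconnected
    (z₀ := 1) (by simp) (hofReal.frequently hreal.frequently) hr

lemma integral_cpow_mul_exp_neg_mul_by_parts (hs : s ≠ 0) (hr : r ≠ 0) {M N : ℝ}
    (hzero : (0 : ℝ) ∉ Set.uIcc M N) :
    ∫ y in M..N, (y : ℂ) ^ s * cexp (-(r * y)) =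
      ((M : ℂ) ^ s * cexp (-(r * M)) - (N : ℂ) ^ s * cexp (-(r * N)) +
        s * ∫ y in M..N, (y : ℂ) ^ (s - 1) * cexp (-(r * y))) / r := by
  have hexp : ∀ y : ℝ, HasDerivAt (fun y : ℝ => -cexp (-(r * y)) / r) (cexp (-(r * y))) y :=
    fun y => ((hasDerivAt_const_mul r).fun_neg.cexp.fun_neg.div_const r).comp_ofReal.congr_deriv
      (by field_simp)
  rw [intervalIntegral.integral_mul_deriv_eq_deriv_mul
    (fun y hy => hasDerivAt_ofReal_cpow_const (ne_of_mem_of_not_mem hy hzero) hs)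
    (fun y _ => hexp y)
    ((intervalIntegral.intervalIntegrable_cpow (Or.inr hzero)).const_mul s)
    (Continuous.intervalIntegrable (by fun_prop) _ _)]
  have hrem : ∀ y : ℝ, s * (y : ℂ) ^ (s - 1) * (-cexp (-(r * y)) / r) =
      -s / r * ((y : ℂ) ^ (s - 1) * cexp (-(r * y))) := fun y => by ring
  simp only [hrem, intervalIntegral.integral_const_mul]
  ring

lemma norm_integral_cpow_mul_exp_neg_mul_le (hs : s.re < 0) (hr : 0 ≤ r.re) (hr₀ : r ≠ 0)
    {M N : ℝ} (hM : 0 < M) (hMN : M ≤ N) :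
    ‖∫ y in M..N, (y : ℂ) ^ s * cexp (-(r * y))‖ ≤ (1 + ‖s‖ / -s.re) * M ^ s.re / ‖r‖ := by
  have hN : 0 < N := hM.trans_le hMN
  have hs₀ : s ≠ 0 := by rintro rfl; simp at hs
  have hzero : (0 : ℝ) ∉ Set.uIcc M N := fun h => hM.not_ge (Set.uIcc_of_le hMN ▸ h).1
  have hint : ‖∫ y in M..N, (y : ℂ) ^ (s - 1) * cexp (-(r * y))‖ ≤
      (M ^ s.re - N ^ s.re) / -s.re := by
    calc _ ≤ ∫ y in M..N, y ^ (s.re - 1) := by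
          refine intervalIntegral.norm_integral_le_of_norm_le hMN (.of_forall fun y hy => ?_)
            (intervalIntegral.intervalIntegrable_rpow (Or.inr hzero))
          simpa using norm_cpow_mul_exp_neg_mul_le (s - 1) hr (hM.trans hy.1)
      _ = (M ^ s.re - N ^ s.re) / -s.re := by
          rw [integral_rpow (Or.inr ⟨by linarith, hzero⟩), sub_add_cancel, div_neg, ← neg_div,
            neg_sub]
  -- Since `|Re s| ≤ ‖s‖`, the remainder integral absorbs the boundary term at `N`.
  have hratio : 1 ≤ ‖s‖ / -s.re := by
    rw [one_le_div (neg_pos.2 hs)]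
    exact (neg_le_abs _).trans (abs_re_le_norm s)
  rw [integral_cpow_mul_exp_neg_mul_by_parts hs₀ hr₀ hzero, norm_div]
  gcongr
  calc _ ≤ M ^ s.re + N ^ s.re + ‖s‖ * ((M ^ s.re - N ^ s.re) / -s.re) := by
        refine (norm_add_le _ _).trans (add_le_add ((norm_sub_le _ _).trans ?_) ?_)
        · gcongr <;> exact norm_cpow_mul_exp_neg_mul_le s hr ‹_›
        · rw [norm_mul]; gcongr
    _ = (1 + ‖s‖ / -s.re) * M ^ s.re - (‖s‖ / -s.re - 1) * N ^ s.re := by ring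
    _ ≤ (1 + ‖s‖ / -s.re) * M ^ s.re :=
        sub_le_self _ (mul_nonneg (sub_nonneg.2 hratio) (by positivity))

lemma norm_integral_cpow_mul_exp_neg_mul_sub_le_of_re_pos (ha : 0 < a.re) (ha₁ : a.re < 1)
    (hr : 0 < r.re) {M : ℝ} (hM : 0 < M) :
    ‖(∫ y in (0 : ℝ)..M, (y : ℂ) ^ (a - 1) * cexp (-(r * y))) - Gamma a * r ^ (-a)‖ ≤
      (1 + ‖a - 1‖ / (1 - a.re)) * M ^ (a.re - 1) / ‖r‖ := by
  have hs : -1 < (a - 1).re := by simpa using ha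
  have hlim : Tendsto (fun N : ℝ => ∫ y in M..N, (y : ℂ) ^ (a - 1) * cexp (-(r * y))) atTop
      (𝓝 (Gamma a * r ^ (-a) - ∫ y in (0 : ℝ)..M, (y : ℂ) ^ (a - 1) * cexp (-(r * y)))) := by
    rw [← integral_cpow_mul_exp_neg_mul_Ioi_of_re_pos ha hr]
    refine ((intervalIntegral_tendsto_integral_Ioi 0 (integrableOn_cpow_mul_exp_neg_mul hs hr)
      tendsto_id).sub_const _).congr fun N => ?_
    exact intervalIntegral.integral_interval_sub_left
      (intervalIntegrable_cpow_mul_exp_neg_mul hs r _ _)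
      (intervalIntegrable_cpow_mul_exp_neg_mul hs r _ _)
  rw [norm_sub_rev]
  refine le_of_tendsto hlim.norm ?_
  filter_upwards [eventually_ge_atTop M] with N hN
  have hr₀ : r ≠ 0 := by rintro rfl; exact hr.false
  simpa using norm_integral_cpow_mul_exp_neg_mul_le (s := a - 1) (by simpa using ha₁) hr.le hr₀
    hM hN

lemma norm_integral_cpow_mul_exp_neg_mul_sub_le (ha : 0 < a.re) (ha₁ : a.re < 1)
    (hr : 0 ≤ r.re) (hr₀ : r ≠ 0) {M : ℝ} (hM : 0 < M) :
    ‖(∫ y in (0 : ℝ)..M, (y : ℂ) ^ (a - 1) * cexp (-(r * y))) - Gamma a * r ^ (-a)‖ ≤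
      (1 + ‖a - 1‖ / (1 - a.re)) * M ^ (a.re - 1) / ‖r‖ := by
  have hclosure : r ∈ closure {z : ℂ | 0 < z.re} := by rwa [closure_setOfPred_lt_re]
  have : (𝓝[{z : ℂ | 0 < z.re}] r).NeBot := mem_closure_iff_nhdsWithin_neBot.1 hclosure
  have hleft : ContinuousAt (fun z : ℂ =>
      ‖(∫ y in (0 : ℝ)..M, (y : ℂ) ^ (a - 1) * cexp (-(z * y))) - Gamma a * z ^ (-a)‖) r :=
    ((continuous_integral_cpow_mul_exp_neg_mul (by simpa using ha) 0 M).continuousAt.sub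
      (continuousAt_const.mul (continuousAt_id.cpow continuousAt_const
        (mem_slitPlane_of_re_nonneg hr hr₀)))).norm
  have hright : ContinuousAt (fun z : ℂ =>
      (1 + ‖a - 1‖ / (1 - a.re)) * M ^ (a.re - 1) / ‖z‖) r :=
    continuousAt_const.div continuous_norm.continuousAt (norm_ne_zero_iff.2 hr₀)
  refine le_of_tendsto_of_tendsto (b := 𝓝[{z : ℂ | 0 < z.re}] r)
    hleft.continuousWithinAt hright.continuousWithinAt ?_
  filter_upwards [self_mem_nhdsWithin] with z hz
  exact norm_integral_cpow_mul_exp_neg_mul_sub_le_of_re_pos ha ha₁ hz hM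

end Laplace

lemma I_mul_ofReal_cpow {b : ℝ} (hb : 0 < b) (s : ℂ) :
    (I * b) ^ s = cexp (s * Real.log b) * cexp (I * s * Real.pi / 2) := by
  rw [cpow_def_of_ne_zero (by simp [hb.ne']), mul_comm I, log_ofReal_mul hb I_ne_zero, log_I,
    ← exp_add]
  ring_nf

lemma neg_I_mul_ofReal_cpow {b : ℝ} (hb : 0 < b) (s : ℂ) :
    (-(I * b)) ^ s = cexp (s * Real.log b) * cexp (-I * s * Real.pi / 2) := by
  rw [cpow_def_of_ne_zero (by simp [hb.ne']), ← neg_mul, mul_comm (-I),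
    log_ofReal_mul hb (neg_ne_zero.2 I_ne_zero), log_neg_I, ← exp_add]
  ring_nf

theorem oscillatory_power_integral_general {μ r : ℂ} (hμ₀ : 0 < μ.re) (hμ₁ : μ.re < 1)
    (hr : 0 ≤ r.re) (hr₀ : r ≠ 0) :
    Tendsto (fun M : ℝ => ∫ y in (0 : ℝ)..M, cexp ((μ - 1) * Real.log y) * cexp (-(r * y)))
      atTop (𝓝 (Gamma μ * r ^ (-μ))) := by
  have hkernel : ∀ M > 0, ∫ y in (0 : ℝ)..M, cexp ((μ - 1) * Real.log y) * cexp (-(r * y)) =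
      ∫ y in (0 : ℝ)..M, (y : ℂ) ^ (μ - 1) * cexp (-(r * y)) := fun M hM => by
    refine intervalIntegral.integral_congr_ae (.of_forall fun y hy => ?_)
    have hy : 0 < y := (Set.uIoc_of_le hM.le ▸ hy).1
    rw [cpow_def_of_ne_zero (ofReal_ne_zero.2 hy.ne'), ofReal_log hy.le, mul_comm (μ - 1)]
  have hdecay : Tendsto (fun M : ℝ => (1 + ‖μ - 1‖ / (1 - μ.re)) * M ^ (μ.re - 1) / ‖r‖) atTop
      (𝓝 0) := by
    have h := tendsto_rpow_neg_atTop (sub_pos.2 hμ₁)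
    simpa only [neg_sub, mul_zero, zero_div] using
      (h.const_mul (1 + ‖μ - 1‖ / (1 - μ.re))).div_const ‖r‖
  rw [tendsto_iff_norm_sub_tendsto_zero]
  refine squeeze_zero' (.of_forall fun M => norm_nonneg _) ?_ hdecay
  filter_upwards [eventually_gt_atTop 0] with M hM
  rw [hkernel M hM]
  exact norm_integral_cpow_mul_exp_neg_mul_sub_le hμ₀ hμ₁ hr hr₀ hM

/-- For `b > 0` and `μ ∈ ℂ` with `0 < Re μ < 1`, the improper integrals
`∫₀^∞ y^{μ-1} e^{±iby} dy` exist and equal `Γ(μ) b^{-μ} e^{±iμπ/2}`, where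
`y^{μ-1} = e^{(μ-1) log y}` and `b^{-μ} = e^{-μ log b}` with the real logarithm. -/
theorem oscillatory_power_integral
    (b : ℝ) (hb : 0 < b) (μ : ℂ) (h₁ : 0 < μ.re) (h₂ : μ.re < 1) :
    Tendsto
      (fun M : ℝ => ∫ y in (0 : ℝ)..M,
        Complex.exp ((μ - 1) * ((Real.log y : ℝ) : ℂ)) *
          Complex.exp (Complex.I * (b : ℂ) * (y : ℂ)))
      atTop
      (𝓝 (Complex.Gamma μ * Complex.exp (-μ * ((Real.log b : ℝ) : ℂ)) *
        Complex.exp (Complex.I * μ * (Real.pi : ℂ) / 2))) ∧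
    Tendsto
      (fun M : ℝ => ∫ y in (0 : ℝ)..M,
        Complex.exp ((μ - 1) * ((Real.log y : ℝ) : ℂ)) *
          Complex.exp (-Complex.I * (b : ℂ) * (y : ℂ)))
      atTop
      (𝓝 (Complex.Gamma μ * Complex.exp (-μ * ((Real.log b : ℝ) : ℂ)) *
        Complex.exp (-Complex.I * μ * (Real.pi : ℂ) / 2))) := by
  constructor
  · simpa [neg_I_mul_ofReal_cpow hb, mul_assoc] using
      oscillatory_power_integral_general h₁ h₂ (r := -(I * b)) (by simp) (by simp [hb.ne'])
  · simpa [I_mul_ofReal_cpow hb, mul_assoc] using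
      oscillatory_power_integral_general h₁ h₂ (r := I * b) (by simp) (by simp [hb.ne'])

end
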